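/- Suppose that p = p(n) satisfies pn ≫ log n. Then for each vertex v of G(n,p), asymptotically almost surely pt_pzf(G(n,p), v) ≥ (1+o(1)) max( log₂ log₂ n , log₄(1/p) ). -/

import Mathlib

open Finset Filter Real
open scoped Classical

namespace PZF

variable {V : Type*} [Fintype V] [DecidableEq V]

/-- The closed degree of `u` into the set `B`, i.e. `|N[u] ∩ B|`. -/
noncomputable def closedDegIn (G : SimpleGraph V) (B : Finset V) (u : V) : ℕ :=
  ((insert u (G.neighborSet u)) ∩ (B : Set V)).ncard

/-- The degree of `u` in `G`. -/
noncomputable def deg (G : SimpleGraph V) (u : V) : ℕ :=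
  (G.neighborSet u).ncard

/-- The probability that the blue vertex `u` forces its white neighbour `v` in one round of
probabilistic zero forcing, when the current blue set is `B`: it equals `|N[u] ∩ B| / deg u`
when `u` is blue, `v` is a white neighbour of `u`, and `0` otherwise. -/
noncomputable def edgeForceProb (G : SimpleGraph V) (B : Finset V) (u v : V) : ℝ :=
  if G.Adj u v ∧ u ∈ B ∧ v ∉ B then (closedDegIn G B u : ℝ) / (deg G u : ℝ) else 0

/-- Given per-ordered-pair forcing probabilities `q u v` (each attempt independent), the
probability that one round starting from the blue set `B` produces exactly the blue set `B'`. -/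
noncomputable def stepOfQ (q : V → V → ℝ) (B B' : Finset V) : ℝ :=
  if B ⊆ B' then
    (∏ v ∈ B' \ B, (1 - ∏ u ∈ B, (1 - q u v))) * ∏ v ∈ B'ᶜ, ∏ u ∈ B, (1 - q u v)
  else 0

/-- The transition rule of standard probabilistic zero forcing, as a function of the history
(the list of blue sets so far; only the current blue set matters). -/
noncomputable def stdStep (G : SimpleGraph V) (hist : List (Finset V)) (B' : Finset V) : ℝ :=
  stepOfQ (edgeForceProb G (hist.getLastD ∅)) (hist.getLastD ∅) B'

/-- Probability of a given future trajectory, given the history so far. -/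
noncomputable def seqProbAux (step : List (Finset V) → Finset V → ℝ) :
    List (Finset V) → List (Finset V) → ℝ
  | _, [] => 1
  | hist, B :: rest => step hist B * seqProbAux step (hist ++ [B]) rest

/-- The probability that, running the process given by the transition rule `step` from the
initial blue set `S` for `ℓ` rounds, the resulting trajectory (including the initial set)
satisfies the predicate `E`. -/
noncomputable def trajEventProb (step : List (Finset V) → Finset V → ℝ) (S : Finset V)
    (ℓ : ℕ) (E : List (Finset V) → Prop) : ℝ :=
  ∑ f : Fin ℓ → Finset V,
    if E (S :: List.ofFn f) then seqProbAux step [S] (List.ofFn f) else 0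

/-- `P(A(S,T,ℓ))`: the probability that, starting probabilistic zero forcing from the blue
set `S`, after `ℓ` rounds every vertex of `T` is blue. -/
noncomputable def probForced (G : SimpleGraph V) (S T : Finset V) (ℓ : ℕ) : ℝ :=
  trajEventProb (stdStep G) S ℓ fun traj => T ⊆ traj.getLastD ∅

/-- `P(pt_pzf(G,S) ≤ ℓ)`: the probability that all vertices are blue after `ℓ` rounds. -/
noncomputable def probAllBlue (G : SimpleGraph V) (S : Finset V) (ℓ : ℕ) : ℝ :=
  probForced G S Finset.univ ℓ

/-- The probability of a fixed graph `G` under the Erdős–Rényi measure `G(n,p)`. -/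
noncomputable def erProb (n : ℕ) (p : ℝ) (G : SimpleGraph (Fin n)) : ℝ :=
  p ^ G.edgeSet.ncard * (1 - p) ^ (n.choose 2 - G.edgeSet.ncard)

/-- The probability that `G(n,p)` satisfies the property `E`. -/
noncomputable def graphProb (n : ℕ) (p : ℝ) (E : SimpleGraph (Fin n) → Prop) : ℝ :=
  ∑ G : SimpleGraph (Fin n), if E G then erProb n p G else 0

/-- `P(pt_pzf(G(n,p), v) ≤ ℓ)`: the joint probability (over the random graph and the forcing
randomness) that probabilistic zero forcing started at `{v}` turns all of `G(n,p)` blue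
within `ℓ` rounds. -/
noncomputable def prPZFwithin (n : ℕ) (p : ℝ) (v : Fin n) (ℓ : ℕ) : ℝ :=
  ∑ G : SimpleGraph (Fin n), erProb n p G * probAllBlue G {v} ℓ

end PZF

namespace PZF

section helpers

set_option linter.unusedSectionVars false

variable {V : Type*} [Fintype V] [DecidableEq V]

theorem step_sum (q : V → V → ℝ) (B T : Finset V) :
    ∑ B' : Finset V, stepOfQ q B B' * (if T ⊆ B' then (1 : ℝ) else 0)
      = ∏ v ∈ T \ B, (1 - ∏ u ∈ B, (1 - q u v)) := by
  have h1 : ∏ v ∈ T \ B, (1 - ∏ u ∈ B, (1 - q u v))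
      = ∏ v ∈ Bᶜ, ((1 - ∏ u ∈ B, (1 - q u v))
          + (if v ∈ T then 0 else ∏ u ∈ B, (1 - q u v))) := by
    have : ∀ v ∈ Bᶜ, ((1 - ∏ u ∈ B, (1 - q u v))
          + (if v ∈ T then 0 else ∏ u ∈ B, (1 - q u v)))
          = if v ∈ T then (1 - ∏ u ∈ B, (1 - q u v)) else 1 := by
      intro v _
      split_ifs <;> ring
    rw [Finset.prod_congr rfl this, ← Finset.prod_filter]
    apply Finset.prod_congr _ (fun _ _ => rfl)
    ext v
    simp [and_comm]
  rw [h1, Finset.prod_add]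
  have h2 : ∑ B' : Finset V, stepOfQ q B B' * (if T ⊆ B' then (1 : ℝ) else 0)
      = ∑ B' ∈ Finset.univ.filter (fun B' => B ⊆ B'),
        stepOfQ q B B' * (if T ⊆ B' then (1 : ℝ) else 0) := by
    rw [Finset.sum_filter]
    apply Finset.sum_congr rfl
    intro B' _
    by_cases h : B ⊆ B' <;> simp [h, stepOfQ]
  rw [h2]
  refine Finset.sum_bij' (fun B' _ => B' \ B) (fun A _ => B ∪ A) ?_ ?_ ?_ ?_ ?_
  · intro B' _
    simp only [Finset.mem_powerset]
    intro x hx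
    simp at hx ⊢
    exact hx.2
  · intro A _
    simp
  · intro B' h
    simp at h
    exact Finset.union_sdiff_of_subset h
  · intro A h
    ext x
    simp only [Finset.mem_powerset] at h
    have := @h x
    simp at this ⊢
    tauto
  · intro B' h
    simp only [Finset.mem_filter, Finset.mem_univ, true_and] at h
    have e : Bᶜ \ (B' \ B) = B'ᶜ := by
      ext x
      have := @h x
      simp
      tauto
    rw [e, stepOfQ, if_pos h, mul_assoc]
    congr 1
    by_cases hT : T ⊆ B'
    · rw [if_pos hT, mul_one]
      apply Finset.prod_congr rfl
      intro v hv
      rw [if_neg]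
      intro hvT
      exact (Finset.mem_compl.1 hv) (hT hvT)
    · rw [if_neg hT, mul_zero]
      obtain ⟨x, hx, hx'⟩ := Finset.not_subset.1 hT
      symm
      apply Finset.prod_eq_zero (i := x) (by simpa using hx')
      rw [if_pos hx]

/-- adjacency indicator -/
noncomputable def adj (G : SimpleGraph V) (u v : V) : ℝ := if G.Adj u v then 1 else 0

theorem adj_nonneg (G : SimpleGraph V) (u v : V) : 0 ≤ adj G u v := by
  unfold adj; split_ifs <;> norm_num

theorem adj_le_one (G : SimpleGraph V) (u v : V) : adj G u v ≤ 1 := by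
  unfold adj; split_ifs <;> norm_num

theorem adj_comm (G : SimpleGraph V) (u v : V) : adj G u v = adj G v u := by
  unfold adj; simp [SimpleGraph.adj_comm]

theorem adj_self (G : SimpleGraph V) (u : V) : adj G u u = 0 := by
  simp [adj]

theorem deg_eq (G : SimpleGraph V) (u : V) : (deg G u : ℝ) = ∑ x, adj G u x := by
  have : (G.neighborSet u) = ((Finset.univ.filter (fun x => G.Adj u x) : Finset V) : Set V) := by
    ext x; simp
  rw [deg, this, Set.ncard_coe_finset]
  simp [adj]

theorem closedDegIn_eq (G : SimpleGraph V) (B : Finset V) (u : V) (hu : u ∈ B) :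
    (closedDegIn G B u : ℝ) = 1 + ∑ x ∈ B, adj G u x := by
  have : (insert u (G.neighborSet u)) ∩ (B : Set V)
      = ((insert u (B.filter (fun x => G.Adj u x)) : Finset V) : Set V) := by
    ext x
    simp
    constructor
    · rintro ⟨rfl | h, h2⟩
      · exact Or.inl rfl
      · exact Or.inr ⟨h2, h⟩
    · rintro (rfl | h)
      · exact ⟨Or.inl rfl, hu⟩
      · exact ⟨Or.inr h.2, h.1⟩
  rw [closedDegIn, this, Set.ncard_coe_finset, Finset.card_insert_of_notMem (by simp)]
  simp [adj, add_comm]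

theorem closedDegIn_le_deg (G : SimpleGraph V) (B : Finset V) (u v : V) (h : G.Adj u v)
    (hv : v ∉ B) (hu : u ∈ B) : (closedDegIn G B u : ℝ) ≤ deg G u := by
  rw [closedDegIn_eq G B u hu, deg_eq]
  have : ∑ x ∈ insert v B, adj G u x ≤ ∑ x, adj G u x :=
    Finset.sum_le_univ_sum_of_nonneg (fun x => adj_nonneg G u x)
  rw [Finset.sum_insert hv] at this
  have h1 : adj G u v = 1 := by simp [adj, h]
  linarith

/-- forcing rate of `u` -/
noncomputable def rate (G : SimpleGraph V) (B : Finset V) (u : V) : ℝ :=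
  (closedDegIn G B u : ℝ) / (deg G u : ℝ)

theorem rate_nonneg (G : SimpleGraph V) (B : Finset V) (u : V) : 0 ≤ rate G B u := by
  unfold rate; positivity

theorem efp_eq (G : SimpleGraph V) (B : Finset V) (u v : V) (hu : u ∈ B) (hv : v ∉ B) :
    edgeForceProb G B u v = rate G B u * adj G u v := by
  unfold edgeForceProb rate adj
  by_cases h : G.Adj u v <;> simp [h, hu, hv]

theorem efp_nonneg (G : SimpleGraph V) (B : Finset V) (u v : V) :
    0 ≤ edgeForceProb G B u v := by
  unfold edgeForceProb
  split_ifs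
  · positivity
  · exact le_rfl

theorem efp_le_one (G : SimpleGraph V) (B : Finset V) (u v : V) :
    edgeForceProb G B u v ≤ 1 := by
  unfold edgeForceProb
  split_ifs with h
  · exact div_le_one_of_le₀ (closedDegIn_le_deg G B u v h.1 h.2.2 h.2.1) (by positivity)
  · norm_num

theorem one_sub_prod_le {ι : Type*} (s : Finset ι) (f : ι → ℝ) (h0 : ∀ i, 0 ≤ f i)
    (h1 : ∀ i, f i ≤ 1) : 1 - ∏ i ∈ s, (1 - f i) ≤ ∑ i ∈ s, f i := by
  classical
  induction s using Finset.induction_on with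
  | empty => simp
  | insert a s ha ih =>
    rw [Finset.prod_insert ha, Finset.sum_insert ha]
    have hP : ∏ i ∈ s, (1 - f i) ≤ 1 :=
      Finset.prod_le_one (fun i _ => by linarith [h1 i]) (fun i _ => by linarith [h0 i])
    nlinarith [h0 a, h1 a]

/-- one step transition -/
noncomputable def st (G : SimpleGraph V) (B B' : Finset V) : ℝ :=
  stepOfQ (edgeForceProb G B) B B'

/-- probability that `v` gets forced -/
noncomputable def av (G : SimpleGraph V) (B : Finset V) (v : V) : ℝ :=
  1 - ∏ u ∈ B, (1 - edgeForceProb G B u v)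

theorem av_nonneg (G : SimpleGraph V) (B : Finset V) (v : V) : 0 ≤ av G B v := by
  have : ∏ u ∈ B, (1 - edgeForceProb G B u v) ≤ 1 :=
    Finset.prod_le_one (fun i _ => by linarith [efp_le_one G B i v])
      (fun i _ => by linarith [efp_nonneg G B i v])
  unfold av; linarith

theorem av_le (G : SimpleGraph V) (B : Finset V) (v : V) (hv : v ∉ B) :
    av G B v ≤ ∑ u ∈ B, rate G B u * adj G u v := by
  refine (one_sub_prod_le B _ (fun i => efp_nonneg G B i v) (fun i => efp_le_one G B i v)).trans ?_
  apply le_of_eq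
  exact Finset.sum_congr rfl fun u hu => efp_eq G B u v hu hv

theorem st_nonneg (G : SimpleGraph V) (B B' : Finset V) : 0 ≤ st G B B' := by
  unfold st stepOfQ
  split_ifs
  · apply mul_nonneg
    · exact Finset.prod_nonneg fun v _ => av_nonneg G B v
    · exact Finset.prod_nonneg fun v _ => Finset.prod_nonneg
        fun u _ => by linarith [efp_le_one G B u v]
  · exact le_rfl

theorem st_zero (G : SimpleGraph V) (B B' : Finset V) (h : ¬ B ⊆ B') : st G B B' = 0 := by
  simp [st, stepOfQ, h]

theorem st_sum_one (G : SimpleGraph V) (B : Finset V) : ∑ B', st G B B' = 1 := by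
  have := step_sum (edgeForceProb G B) B ∅
  simpa [st] using this

theorem st_sum_mem (G : SimpleGraph V) (B : Finset V) (v : V) (hv : v ∉ B) :
    ∑ B', st G B B' * (if v ∈ B' then (1 : ℝ) else 0) = av G B v := by
  have := step_sum (edgeForceProb G B) B {v}
  have e : ({v} : Finset V) \ B = {v} := by
    ext x; simp; rintro rfl; exact hv
  rw [e] at this
  simpa [st, av] using this

theorem st_sum_mem2 (G : SimpleGraph V) (B : Finset V) (v w : V) (hv : v ∉ B) (hw : w ∉ B)
    (hvw : v ≠ w) :
    ∑ B', st G B B' * ((if v ∈ B' then (1 : ℝ) else 0) * (if w ∈ B' then (1 : ℝ) else 0))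
      = av G B v * av G B w := by
  have := step_sum (edgeForceProb G B) B {v, w}
  have e : ({v, w} : Finset V) \ B = {v, w} := by
    ext x; simp; rintro (rfl | rfl) <;> assumption
  rw [e, Finset.prod_pair hvw] at this
  rw [av, av, ← this]
  apply Finset.sum_congr rfl
  intro B' _
  by_cases h1 : v ∈ B' <;> by_cases h2 : w ∈ B' <;> simp [h1, h2, st, Finset.insert_subset_iff]

/-- potential -/
noncomputable def Psi (G : SimpleGraph V) (B : Finset V) : ℝ :=
  ∑ u ∈ B, (closedDegIn G B u : ℝ)

theorem Psi_eq (G : SimpleGraph V) (B : Finset V) :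
    Psi G B = (B.card : ℝ) + ∑ u ∈ B, ∑ x ∈ B, adj G u x := by
  unfold Psi
  rw [Finset.sum_congr rfl (fun u hu => closedDegIn_eq G B u hu), Finset.sum_add_distrib]
  simp

theorem card_le_Psi (G : SimpleGraph V) (B : Finset V) : (B.card : ℝ) ≤ Psi G B := by
  rw [Psi_eq]
  have : 0 ≤ ∑ u ∈ B, ∑ x ∈ B, adj G u x :=
    Finset.sum_nonneg fun u _ => Finset.sum_nonneg fun x _ => adj_nonneg G u x
  linarith

theorem Psi_nonneg (G : SimpleGraph V) (B : Finset V) : 0 ≤ Psi G B :=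
  le_trans (by positivity) (card_le_Psi G B)

theorem Psi_le_sq (G : SimpleGraph V) (B : Finset V) : Psi G B ≤ (B.card : ℝ) ^ 2 := by
  have h : ∀ u ∈ B, (closedDegIn G B u : ℝ) ≤ B.card := by
    intro u hu
    have : closedDegIn G B u ≤ (B : Set V).ncard :=
      Set.ncard_le_ncard Set.inter_subset_right (Finset.finite_toSet B)
    rw [Set.ncard_coe_finset] at this
    exact_mod_cast this
  calc Psi G B ≤ ∑ u ∈ B, (B.card : ℝ) := Finset.sum_le_sum h
    _ = _ := by simp [sq]

theorem rate_sum_le (G : SimpleGraph V) (B : Finset V) (u : V) :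
    ∑ v ∈ Bᶜ, rate G B u * adj G u v ≤ closedDegIn G B u := by
  rw [← Finset.mul_sum]
  have h : ∑ v ∈ Bᶜ, adj G u v ≤ deg G u := by
    rw [deg_eq]
    exact Finset.sum_le_univ_sum_of_nonneg (fun x => adj_nonneg G u x)
  refine (mul_le_mul_of_nonneg_left h (rate_nonneg G B u)).trans ?_
  unfold rate
  by_cases hd : (deg G u : ℝ) = 0
  · rw [hd]; simp
  · rw [div_mul_cancel₀ _ hd]

theorem rate_sum_sum_le (G : SimpleGraph V) (B : Finset V) :
    ∑ u ∈ B, ∑ v ∈ Bᶜ, rate G B u * adj G u v ≤ Psi G B :=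
  Finset.sum_le_sum fun u _ => rate_sum_le G B u

theorem av_sum_le (G : SimpleGraph V) (B : Finset V) : ∑ v ∈ Bᶜ, av G B v ≤ Psi G B := by
  refine (Finset.sum_le_sum fun v hv => av_le G B v (Finset.mem_compl.1 hv)).trans ?_
  rw [Finset.sum_comm]
  exact rate_sum_sum_le G B

theorem card_split (B B' : Finset V) (h : B ⊆ B') :
    (B'.card : ℝ) = B.card + ∑ v ∈ Bᶜ, (if v ∈ B' then (1 : ℝ) else 0) := by
  rw [← Finset.sum_filter, Finset.sum_const, nsmul_eq_mul, mul_one]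
  have : Bᶜ.filter (fun v => v ∈ B') = B' \ B := by
    ext x; simp [and_comm]
  rw [this, ← Nat.cast_add, add_comm B.card, Finset.card_sdiff_add_card_eq_card h]

theorem st_card (G : SimpleGraph V) (B : Finset V) :
    ∑ B', st G B B' * (B'.card : ℝ) = B.card + ∑ v ∈ Bᶜ, av G B v := by
  have h : ∀ B' : Finset V, st G B B' * (B'.card : ℝ)
      = B.card * st G B B' + ∑ v ∈ Bᶜ, st G B B' * (if v ∈ B' then (1 : ℝ) else 0) := by
    intro B'
    by_cases h : B ⊆ B'
    · rw [card_split B B' h, mul_add, Finset.mul_sum]; ring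
    · simp [st_zero G B B' h]
  rw [Finset.sum_congr rfl fun B' _ => h B', Finset.sum_add_distrib, ← Finset.mul_sum,
    st_sum_one, mul_one, Finset.sum_comm]
  congr 1
  exact Finset.sum_congr rfl fun v hv => st_sum_mem G B v (Finset.mem_compl.1 hv)

/-- law of the blue set after `t` rounds -/
noncomputable def mu (G : SimpleGraph V) (S : Finset V) : ℕ → Finset V → ℝ
  | 0 => fun B => if B = S then 1 else 0
  | t + 1 => fun B' => ∑ B, mu G S t B * st G B B'

theorem mu_nonneg (G : SimpleGraph V) (S : Finset V) (t : ℕ) (B : Finset V) :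
    0 ≤ mu G S t B := by
  induction t generalizing B with
  | zero => unfold mu; split_ifs <;> norm_num
  | succ t ih =>
    unfold mu
    exact Finset.sum_nonneg fun B _ => mul_nonneg (ih B) (st_nonneg G _ _)

theorem mu_succ_sum (G : SimpleGraph V) (S : Finset V) (t : ℕ) (g : Finset V → ℝ) :
    ∑ B', mu G S (t + 1) B' * g B' = ∑ B, mu G S t B * ∑ B', st G B B' * g B' := by
  simp only [mu, Finset.sum_mul, Finset.mul_sum]
  rw [Finset.sum_comm]
  simp only [mul_assoc]

theorem mu_sum_one (G : SimpleGraph V) (S : Finset V) (t : ℕ) : ∑ B, mu G S t B = 1 := by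
  induction t with
  | zero => simp [mu]
  | succ t ih =>
    have := mu_succ_sum G S t (fun _ => 1)
    simpa [st_sum_one, ih] using this

theorem mu_le_one (G : SimpleGraph V) (S : Finset V) (t : ℕ) (B : Finset V) :
    mu G S t B ≤ 1 := by
  rw [← mu_sum_one G S t]
  exact Finset.single_le_sum (fun B _ => mu_nonneg G S t B) (Finset.mem_univ B)

/-- Markov operator -/
noncomputable def Kop (G : SimpleGraph V) (g : Finset V → ℝ) (B : Finset V) : ℝ :=
  ∑ B', st G B B' * g B'

theorem mu_Kop (G : SimpleGraph V) (S : Finset V) (t : ℕ) (g : Finset V → ℝ) :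
    ((Kop G)^[t] g) S = ∑ B, mu G S t B * g B := by
  induction t generalizing g with
  | zero => simp [mu]
  | succ t ih =>
    rw [Function.iterate_succ_apply, ih, mu_succ_sum]
    rfl

theorem traj_Kop (G : SimpleGraph V) (g : Finset V → ℝ) (ℓ : ℕ) (hist : List (Finset V)) 
    (c : Finset V) (hc : hist.getLastD ∅ = c) :
    ∑ f : Fin ℓ → Finset V, g ((c :: List.ofFn f).getLastD ∅) *
      seqProbAux (stdStep G) hist (List.ofFn f) = ((Kop G)^[ℓ] g) c := by
  induction ℓ generalizing hist c with
  | zero => simp [seqProbAux]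
  | succ ℓ ih =>
    rw [← (Fin.consEquiv (fun _ => Finset V)).sum_comp, Fintype.sum_prod_type,
      Function.iterate_succ_apply', Kop]
    apply Finset.sum_congr rfl
    intro B _
    rw [← ih (hist ++ [B]) B (by simp), Finset.mul_sum]
    apply Finset.sum_congr rfl
    intro f _
    simp only [Fin.consEquiv_apply, List.ofFn_succ, Fin.cons_zero, Fin.cons_succ, seqProbAux]
    rw [stdStep, hc]
    simp only [st, List.getLastD_cons]
    ring

theorem probAllBlue_eq (G : SimpleGraph V) (S : Finset V) (ℓ : ℕ) :
    probAllBlue G S ℓ = mu G S ℓ Finset.univ := by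
  have h := traj_Kop G (fun B => if Finset.univ ⊆ B then 1 else 0) ℓ [S] S (by simp)
  rw [mu_Kop] at h
  have h2 : ∑ B : Finset V, mu G S ℓ B * (if Finset.univ ⊆ B then (1 : ℝ) else 0)
      = mu G S ℓ Finset.univ := by
    simp [Finset.univ_subset_iff]
  rw [h2] at h
  rw [← h, probAllBlue, probForced, trajEventProb]
  apply Finset.sum_congr rfl
  intro f _
  by_cases h : Finset.univ ⊆ (S :: List.ofFn f).getLastD ∅
  · rw [if_pos h, if_pos h, one_mul]
  · rw [if_neg h, if_neg h, zero_mul]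

/-- the log bound -/
theorem mu_log (G : SimpleGraph V) (v : V) (t : ℕ) :
    ∑ B, mu G {v} t B * Real.log B.card ≤ (2 ^ t - 1) * Real.log 2 := by
  induction t with
  | zero => simp [mu]
  | succ t ih =>
    rw [mu_succ_sum]
    have key : ∀ B : Finset V, ∑ B', st G B B' * Real.log B'.card
        ≤ Real.log 2 + 2 * Real.log B.card := by
      intro B
      rcases B.eq_empty_or_nonempty with rfl | hB
      · have : ∀ B' : Finset V, st G ∅ B' * Real.log B'.card = 0 := by
          intro B'
          rcases B'.eq_empty_or_nonempty with rfl | ⟨x, hx⟩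
          · simp
          · have : st G ∅ B' = 0 := by
              simp only [st, stepOfQ, Finset.empty_subset, if_true]
              rw [Finset.prod_eq_zero (i := x)]
              · simp
              · simpa using hx
              · simp
            rw [this, zero_mul]
        simp only [this]
        simp
        positivity
      · have hb : (1 : ℝ) ≤ B.card := by exact_mod_cast hB.card_pos
        set b : ℝ := (B.card : ℝ) with hbdef
        have hlog : Real.log (2 * b ^ 2) = Real.log 2 + 2 * Real.log b := by
          rw [Real.log_mul (by norm_num) (by positivity), Real.log_pow]; norm_num
        rw [← hlog]
        have h1 : ∀ B', st G B B' * Real.log B'.card ≤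
            st G B B' * (Real.log (2 * b ^ 2) - 1) + (st G B B' * B'.card) / (2 * b ^ 2) := by
          intro B'
          by_cases h : B ⊆ B'
          · have hc : (0 : ℝ) < B'.card := by
              exact_mod_cast (hB.mono h).card_pos
            have := Real.log_le_sub_one_of_pos (x := B'.card / (2 * b ^ 2)) (by positivity)
            rw [Real.log_div (by positivity) (by positivity)] at this
            have h3 : Real.log B'.card ≤ (Real.log (2 * b ^ 2) - 1) + B'.card / (2 * b ^ 2) := by
              linarith
            have := mul_le_mul_of_nonneg_left h3 (st_nonneg G B B')
            rw [mul_add] at this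
            rw [mul_div_assoc]
            exact this
          · simp [st_zero G B B' h]
        refine (Finset.sum_le_sum fun B' _ => h1 B').trans ?_
        rw [Finset.sum_add_distrib, ← Finset.sum_mul, st_sum_one, ← Finset.sum_div, st_card]
        have h4 : b + ∑ v ∈ Bᶜ, av G B v ≤ 2 * b ^ 2 := by
          have := av_sum_le G B
          have := Psi_le_sq G B
          nlinarith
        have h5 : (b + ∑ v ∈ Bᶜ, av G B v) / (2 * b ^ 2) ≤ 1 :=
          div_le_one_of_le₀ h4 (by positivity)
        linarith
    refine (Finset.sum_le_sum fun B _ =>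
      mul_le_mul_of_nonneg_left (key B) (mu_nonneg G {v} t B)).trans ?_
    have : ∀ B : Finset V, mu G {v} t B * (Real.log 2 + 2 * Real.log B.card)
        = mu G {v} t B * Real.log 2 + 2 * (mu G {v} t B * Real.log B.card) := by
      intro B; ring
    rw [Finset.sum_congr rfl fun B _ => this B, Finset.sum_add_distrib, ← Finset.sum_mul,
      mu_sum_one, ← Finset.mul_sum, pow_succ]
    linarith

theorem allBlue_log (G : SimpleGraph V) (v : V) (t : ℕ) :
    mu G {v} t Finset.univ * Real.log (Fintype.card V) ≤ 2 ^ t * Real.log 2 := by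
  have h := mu_log G v t
  have h2 : mu G {v} t Finset.univ * Real.log (Fintype.card V)
      ≤ ∑ B, mu G {v} t B * Real.log B.card :=
    Finset.single_le_sum (f := fun B : Finset V => mu G {v} t B * Real.log B.card)
      (fun B _ => mul_nonneg (mu_nonneg G {v} t B) (Real.log_natCast_nonneg _))
      (Finset.mem_univ Finset.univ)
  have : 0 < Real.log 2 := Real.log_pos (by norm_num)
  nlinarith

/-- `G` and `G'` look the same from the blue set `B`. -/
def Agree (B : Finset V) (G G' : SimpleGraph V) : Prop :=
  (∀ u ∈ B, ∀ v ∈ B, (G.Adj u v ↔ G'.Adj u v)) ∧ (∀ u ∈ B, deg G u = deg G' u)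

theorem Agree.mono {B B' : Finset V} {G G' : SimpleGraph V} (h : Agree B' G G') (hB : B ⊆ B') :
    Agree B G G' :=
  ⟨fun u hu v hv => h.1 u (hB hu) v (hB hv), fun u hu => h.2 u (hB hu)⟩

theorem Agree.adj_eq {B : Finset V} {G G' : SimpleGraph V} (h : Agree B G G') {u v : V}
    (hu : u ∈ B) (hv : v ∈ B) : adj G u v = adj G' u v := by
  simp [adj, h.1 u hu v hv]

theorem Agree.cdi {B : Finset V} {G G' : SimpleGraph V} (h : Agree B G G') {u : V}
    (hu : u ∈ B) : (closedDegIn G B u : ℝ) = closedDegIn G' B u := by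
  rw [closedDegIn_eq G B u hu, closedDegIn_eq G' B u hu]
  congr 1
  exact Finset.sum_congr rfl fun x hx => h.adj_eq hu hx

theorem Agree.rate_eq {B : Finset V} {G G' : SimpleGraph V} (h : Agree B G G') {u : V}
    (hu : u ∈ B) : rate G B u = rate G' B u := by
  unfold rate
  rw [h.cdi hu, h.2 u hu]

theorem Agree.Psi_eq {B : Finset V} {G G' : SimpleGraph V} (h : Agree B G G') :
    Psi G B = Psi G' B :=
  Finset.sum_congr rfl fun _ hu => h.cdi hu

theorem white_prod (G : SimpleGraph V) (B B' : Finset V) (hB : B ⊆ B') :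
    ∏ v ∈ B'ᶜ, ∏ u ∈ B, (1 - edgeForceProb G B u v)
      = ∏ u ∈ B, (1 - rate G B u) ^ (B'ᶜ.filter (fun v => G.Adj u v)).card := by
  rw [Finset.prod_comm]
  apply Finset.prod_congr rfl
  intro u hu
  rw [← Finset.prod_const, Finset.prod_filter]
  apply Finset.prod_congr rfl
  intro v hv
  rw [efp_eq G B u v hu (fun h => (Finset.mem_compl.1 hv) (hB h)), adj]
  split_ifs <;> simp

theorem white_card (G : SimpleGraph V) (B' : Finset V) (u : V) :
    ((B'ᶜ.filter (fun v => G.Adj u v)).card : ℝ) = deg G u - ∑ x ∈ B', adj G u x := by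
  rw [deg_eq, ← Finset.sum_add_sum_compl B']
  simp [adj]

theorem Agree.st_eq {B B' : Finset V} {G G' : SimpleGraph V} (h : Agree B' G G') :
    st G B B' = st G' B B' := by
  by_cases hB : B ⊆ B'
  swap
  · rw [st_zero G B B' hB, st_zero G' B B' hB]
  have hB2 := h.mono hB
  unfold st stepOfQ
  rw [if_pos hB, if_pos hB, white_prod G B B' hB, white_prod G' B B' hB]
  congr 1
  · apply Finset.prod_congr rfl
    intro v hv
    rw [Finset.mem_sdiff] at hv
    congr 1
    apply Finset.prod_congr rfl
    intro u hu
    rw [efp_eq G B u v hu hv.2, efp_eq G' B u v hu hv.2, hB2.rate_eq hu,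
      h.adj_eq (hB hu) hv.1]
  · apply Finset.prod_congr rfl
    intro u hu
    rw [hB2.rate_eq hu]
    congr 1
    have : ((B'ᶜ.filter (fun v => G.Adj u v)).card : ℝ)
        = ((B'ᶜ.filter (fun v => G'.Adj u v)).card : ℝ) := by
      rw [white_card, white_card, h.2 u (hB hu)]
      congr 1
      exact Finset.sum_congr rfl fun x hx => h.adj_eq (hB hu) hx
    exact_mod_cast this

theorem Agree.mu_eq {B : Finset V} {G G' : SimpleGraph V} (h : Agree B G G') (S : Finset V)
    (t : ℕ) : mu G S t B = mu G' S t B := by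
  induction t generalizing B with
  | zero => simp [mu]
  | succ t ih =>
    simp only [mu]
    apply Finset.sum_congr rfl
    intro C _
    by_cases hC : C ⊆ B
    · rw [ih (h.mono hC), h.st_eq]
    · rw [st_zero G C B hC, st_zero G' C B hC, mul_zero, mul_zero]

/-- switch the pairs `wv` and `wx`. -/
def sw (G : SimpleGraph V) (w v x : V) : SimpleGraph V :=
  SimpleGraph.fromEdgeSet ((Equiv.swap s(w, v) s(w, x)) ⁻¹' G.edgeSet)

theorem swap_diag {w v x : V} (hv : w ≠ v) (hx : w ≠ x) (a : V) :
    Equiv.swap s(w, v) s(w, x) s(a, a) = s(a, a) := by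
  apply Equiv.swap_apply_of_ne_of_ne
  · intro h; simp at h; rcases h with h | h <;> exact hv (h.1.symm.trans h.2 |>.symm ▸ rfl)
  · intro h; simp at h; rcases h with h | h <;> exact hx (h.1.symm.trans h.2 |>.symm ▸ rfl)

theorem sw_adj (G : SimpleGraph V) {w v x : V} (hv : w ≠ v) (hx : w ≠ x) (a b : V) :
    (sw G w v x).Adj a b ↔ Equiv.swap s(w, v) s(w, x) s(a, b) ∈ G.edgeSet := by
  rw [sw, SimpleGraph.fromEdgeSet_adj]
  constructor
  · exact fun h => h.1
  · intro h
    refine ⟨h, ?_⟩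
    rintro rfl
    rw [swap_diag hv hx] at h
    simp at h

theorem sw_edgeSet (G : SimpleGraph V) {w v x : V} (hv : w ≠ v) (hx : w ≠ x) :
    (sw G w v x).edgeSet = (Equiv.swap s(w, v) s(w, x)) ⁻¹' G.edgeSet := by
  ext e
  induction e with
  | h a b => rw [SimpleGraph.mem_edgeSet, sw_adj G hv hx]; rfl

theorem sw_sw (G : SimpleGraph V) {w v x : V} (hv : w ≠ v) (hx : w ≠ x) :
    sw (sw G w v x) w v x = G := by
  ext a b
  rw [sw_adj _ hv hx, sw_edgeSet G hv hx]
  simp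

theorem sw_ncard (G : SimpleGraph V) {w v x : V} (hv : w ≠ v) (hx : w ≠ x) :
    (sw G w v x).edgeSet.ncard = G.edgeSet.ncard := by
  rw [sw_edgeSet G hv hx, ← Equiv.image_symm_eq_preimage]
  exact Set.ncard_image_of_injective _ (Equiv.injective _)

theorem sw_adj_w (G : SimpleGraph V) {w v x : V} (hv : w ≠ v) (hx : w ≠ x) (b : V) :
    adj (sw G w v x) w b = adj G w (Equiv.swap v x b) := by
  have : (sw G w v x).Adj w b ↔ G.Adj w (Equiv.swap v x b) := by
    rw [sw_adj G hv hx, ← SimpleGraph.mem_edgeSet]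
    have : Equiv.swap s(w, v) s(w, x) s(w, b) = s(w, Equiv.swap v x b) := by
      by_cases h1 : b = v
      · subst h1; simp
      by_cases h2 : b = x
      · subst h2; simp
      rw [Equiv.swap_apply_of_ne_of_ne h1 h2]
      apply Equiv.swap_apply_of_ne_of_ne
      · intro h; rw [Sym2.congr_right] at h; exact h1 h
      · intro h; rw [Sym2.congr_right] at h; exact h2 h
    rw [this]
  simp [adj, this]

theorem sw_adj_ne (G : SimpleGraph V) {w v x : V} (hv : w ≠ v) (hx : w ≠ x) (a b : V)
    (h1 : a ≠ w) (h2 : a ≠ v) (h3 : a ≠ x) : (sw G w v x).Adj a b ↔ G.Adj a b := by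
  rw [sw_adj G hv hx, ← SimpleGraph.mem_edgeSet, Equiv.swap_apply_of_ne_of_ne]
  · intro h; simp at h; tauto
  · intro h; simp at h; tauto

theorem sw_deg (G : SimpleGraph V) {w v x : V} (hv : w ≠ v) (hx : w ≠ x) (a : V)
    (h2 : a ≠ v) (h3 : a ≠ x) : deg (sw G w v x) a = deg G a := by
  have : (deg (sw G w v x) a : ℝ) = deg G a := by
    rw [deg_eq, deg_eq]
    by_cases h1 : a = w
    · subst h1
      simp only [sw_adj_w G hv hx]
      exact Equiv.sum_comp (Equiv.swap v x) (fun b => adj G a b)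
    · apply Finset.sum_congr rfl
      intro b _
      simp [adj, sw_adj_ne G hv hx a b h1 h2 h3]
  exact_mod_cast this

theorem sw_agree (G : SimpleGraph V) {w v x : V} (hv : w ≠ v) (hx : w ≠ x) (B : Finset V)
    (hvB : v ∉ B) (hxB : x ∉ B) : Agree B (sw G w v x) G := by
  constructor
  · intro a ha b hb
    rw [sw_adj G hv hx, ← SimpleGraph.mem_edgeSet, Equiv.swap_apply_of_ne_of_ne]
    · intro h; simp at h; rcases h with h | h
      · exact hvB (h.2 ▸ hb)
      · exact hvB (h.1 ▸ ha)
    · intro h; simp at h; rcases h with h | h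
      · exact hxB (h.2 ▸ hb)
      · exact hxB (h.1 ▸ ha)
  · intro a ha
    exact sw_deg G hv hx a (fun h => hvB (h ▸ ha)) (fun h => hxB (h ▸ ha))

theorem switch (er : SimpleGraph V → ℝ) (her0 : ∀ G, 0 ≤ er G)
    (her : ∀ G G' : SimpleGraph V, G.edgeSet.ncard = G'.edgeSet.ncard → er G = er G')
    (H : SimpleGraph V → ℝ) (hH0 : ∀ G, 0 ≤ H G) (w v : V) (hwv : w ≠ v) (B : Finset V)
    (D s : ℝ)
    (hH : ∀ G x, x ∉ B → x ≠ v → x ≠ w → H (sw G w v x) = H G)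
    (hD : ∀ G, H G ≠ 0 → (deg G w : ℝ) ≤ D ∧ (B.card : ℝ) ≤ s) :
    (Fintype.card V - s - 2 - D) * ∑ G, er G * H G * adj G w v
      ≤ D * ∑ G, er G * H G := by
  set X : Finset V := (insert v (insert w B))ᶜ with hX
  have hXc : (Fintype.card V : ℝ) - B.card - 2 ≤ X.card := by
    have h1 := Finset.card_compl_add_card (insert v (insert w B))
    have h2 : (insert v (insert w B)).card ≤ B.card + 2 :=
      (Finset.card_insert_le _ _).trans (by have := Finset.card_insert_le w B; omega)
    have h1' : (X.card : ℝ) + ((insert v (insert w B)).card : ℝ) = Fintype.card V := by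
      exact_mod_cast h1
    have h2' : ((insert v (insert w B)).card : ℝ) ≤ B.card + 2 := by exact_mod_cast h2
    linarith
  have hXs : ∀ G : SimpleGraph V, ∑ x ∈ X, adj G w x ≤ deg G w := by
    intro G
    rw [deg_eq]
    exact Finset.sum_le_univ_sum_of_nonneg (fun x => adj_nonneg G w x)
  have step1 : (Fintype.card V - s - 2 - D) * ∑ G, er G * H G * adj G w v
      ≤ ∑ G, ∑ x ∈ X, er G * H G * (adj G w v * (1 - adj G w x)) := by
    rw [Finset.mul_sum]
    apply Finset.sum_le_sum
    intro G _
    by_cases hz : H G = 0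
    · simp [hz]
    obtain ⟨hd, hb⟩ := hD G hz
    have e : ∑ x ∈ X, er G * H G * (adj G w v * (1 - adj G w x))
        = er G * H G * adj G w v * (X.card - ∑ x ∈ X, adj G w x) := by
      rw [← Finset.mul_sum, ← Finset.mul_sum, Finset.sum_sub_distrib]
      simp; ring
    rw [e, mul_comm]
    apply mul_le_mul_of_nonneg_left
    · linarith [hXs G]
    · exact mul_nonneg (mul_nonneg (her0 G) (hH0 G)) (adj_nonneg G w v)
  have step2 : ∑ G, ∑ x ∈ X, er G * H G * (adj G w v * (1 - adj G w x))
      = ∑ x ∈ X, ∑ G, er G * H G * (adj G w x * (1 - adj G w v)) := by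
    rw [Finset.sum_comm]
    apply Finset.sum_congr rfl
    intro x hx
    simp only [hX, Finset.mem_compl, Finset.mem_insert, not_or] at hx
    obtain ⟨hxv, hxw, hxB⟩ := hx
    have hwx : w ≠ x := fun h => hxw h.symm
    refine Finset.sum_bij' (fun G _ => sw G w v x) (fun G _ => sw G w v x) ?_ ?_ ?_ ?_ ?_
    · intros; simp
    · intros; simp
    · intro G _; exact sw_sw G hwv hwx
    · intro G _; exact sw_sw G hwv hwx
    · intro G _
      rw [hH G x hxB hxv hxw, her _ _ (sw_ncard G hwv hwx), sw_adj_w G hwv hwx,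
        sw_adj_w G hwv hwx]
      simp
  refine step1.trans (step2.le.trans ?_)
  rw [Finset.sum_comm, Finset.mul_sum]
  apply Finset.sum_le_sum
  intro G _
  by_cases hz : H G = 0
  · simp [hz]
  obtain ⟨hd, hb⟩ := hD G hz
  have h0 : 0 ≤ er G * H G := mul_nonneg (her0 G) (hH0 G)
  calc ∑ x ∈ X, er G * H G * (adj G w x * (1 - adj G w v))
      ≤ ∑ x ∈ X, er G * H G * adj G w x := by
        apply Finset.sum_le_sum
        intro x _
        apply mul_le_mul_of_nonneg_left _ h0
        nlinarith [adj_nonneg G w x, adj_nonneg G w v]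
    _ = er G * H G * ∑ x ∈ X, adj G w x := by rw [Finset.mul_sum]
    _ ≤ er G * H G * D := mul_le_mul_of_nonneg_left ((hXs G).trans hd) h0
    _ = D * (er G * H G) := by ring

theorem sum_split (B B' : Finset V) (h : B ⊆ B') (f : V → ℝ) :
    ∑ u ∈ B', f u = ∑ u ∈ B, f u + ∑ v ∈ Bᶜ, (if v ∈ B' then (1 : ℝ) else 0) * f v := by
  simp only [ite_mul, one_mul, zero_mul]
  rw [← Finset.sum_filter]
  have : Bᶜ.filter (fun v => v ∈ B') = B' \ B := by
    ext x; simp [and_comm]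
  rw [this, add_comm, Finset.sum_sdiff h]

/-- all degrees in `B` at most `D` -/
def DegOK (D : ℝ) (G : SimpleGraph V) (B : Finset V) : Prop := ∀ w ∈ B, (deg G w : ℝ) ≤ D

/-- truncated potential -/
noncomputable def Phi (D s : ℝ) (G : SimpleGraph V) (B : Finset V) : ℝ :=
  if DegOK D G B then min (Psi G B) s else 0

/-- degree indicator -/
noncomputable def di (D : ℝ) (G : SimpleGraph V) (v : V) : ℝ :=
  if (deg G v : ℝ) ≤ D then 1 else 0

theorem di_nonneg (D : ℝ) (G : SimpleGraph V) (v : V) : 0 ≤ di D G v := by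
  unfold di; split_ifs <;> norm_num

theorem di_le_one (D : ℝ) (G : SimpleGraph V) (v : V) : di D G v ≤ 1 := by
  unfold di; split_ifs <;> norm_num

theorem Phi_nonneg (D s : ℝ) (hs : 0 ≤ s) (G : SimpleGraph V) (B : Finset V) :
    0 ≤ Phi D s G B := by
  unfold Phi
  split_ifs
  · exact le_min (Psi_nonneg G B) hs
  · exact le_rfl

theorem Phi_le (D s : ℝ) (hs : 0 ≤ s) (G : SimpleGraph V) (B : Finset V) :
    Phi D s G B ≤ s := by
  unfold Phi
  split_ifs
  · exact min_le_right _ _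
  · exact hs

theorem Phi_pointwise (D s : ℝ) (G : SimpleGraph V) (B B' : Finset V) (h : B ⊆ B') :
    Phi D s G B' ≤ Psi G B + ∑ v ∈ Bᶜ, (if v ∈ B' then (1 : ℝ) else 0)
      + 2 * ∑ v ∈ Bᶜ, ∑ w ∈ B, adj G w v * (if v ∈ B' then (1 : ℝ) else 0)
      + ∑ v ∈ Bᶜ, ∑ v' ∈ Bᶜ, di D G v' * adj G v' v *
        ((if v ∈ B' then (1 : ℝ) else 0) * (if v' ∈ B' then (1 : ℝ) else 0)) := by
  have i0 : ∀ v, 0 ≤ (if v ∈ B' then (1 : ℝ) else 0) := by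
    intro v; split_ifs <;> norm_num
  by_cases hok : DegOK D G B'
  · rw [Phi, if_pos hok]
    refine (min_le_left _ _).trans ?_
    rw [Psi_eq, Psi_eq, card_split B B' h, sum_split B B' h]
    have e1 : ∑ u ∈ B, ∑ x ∈ B', adj G u x = ∑ u ∈ B, ∑ x ∈ B, adj G u x
        + ∑ v ∈ Bᶜ, ∑ w ∈ B, adj G w v * (if v ∈ B' then (1 : ℝ) else 0) := by
      rw [Finset.sum_comm (s := Bᶜ), ← Finset.sum_add_distrib]
      apply Finset.sum_congr rfl
      intro u _
      rw [sum_split B B' h]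
      congr 1
      exact Finset.sum_congr rfl fun x _ => mul_comm _ _
    have e2 : ∑ v ∈ Bᶜ, (if v ∈ B' then (1 : ℝ) else 0) * ∑ x ∈ B', adj G v x
        = ∑ v ∈ Bᶜ, ∑ w ∈ B, adj G w v * (if v ∈ B' then (1 : ℝ) else 0)
        + ∑ v ∈ Bᶜ, ∑ v' ∈ Bᶜ, di D G v' * adj G v' v *
        ((if v ∈ B' then (1 : ℝ) else 0) * (if v' ∈ B' then (1 : ℝ) else 0)) := by
      rw [← Finset.sum_add_distrib]
      apply Finset.sum_congr rfl
      intro v _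
      rw [sum_split B B' h, mul_add, Finset.mul_sum, Finset.mul_sum]
      congr 1
      · apply Finset.sum_congr rfl
        intro w _
        rw [adj_comm, mul_comm]
      · apply Finset.sum_congr rfl
        intro v' _
        by_cases hv' : v' ∈ B'
        · have : di D G v' = 1 := by simp [di, hok v' hv']
          rw [this, adj_comm G v' v]; ring
        · simp [hv']
    rw [e1, e2]
    linarith
  · rw [Phi, if_neg hok]
    have h1 := Psi_nonneg G B
    have h2 : 0 ≤ ∑ v ∈ Bᶜ, (if v ∈ B' then (1 : ℝ) else 0) :=
      Finset.sum_nonneg fun v _ => i0 v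
    have h3 : 0 ≤ ∑ v ∈ Bᶜ, ∑ w ∈ B, adj G w v * (if v ∈ B' then (1 : ℝ) else 0) :=
      Finset.sum_nonneg fun v _ => Finset.sum_nonneg fun w _ =>
        mul_nonneg (adj_nonneg G w v) (i0 v)
    have h4 : 0 ≤ ∑ v ∈ Bᶜ, ∑ v' ∈ Bᶜ, di D G v' * adj G v' v *
        ((if v ∈ B' then (1 : ℝ) else 0) * (if v' ∈ B' then (1 : ℝ) else 0)) :=
      Finset.sum_nonneg fun v _ => Finset.sum_nonneg fun v' _ =>
        mul_nonneg (mul_nonneg (di_nonneg D G v') (adj_nonneg G v' v)) (mul_nonneg (i0 v) (i0 v'))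
    linarith

/-- first error term -/
noncomputable def X1 (G : SimpleGraph V) (B : Finset V) : ℝ :=
  ∑ w ∈ B, ∑ u ∈ B.erase w, ∑ v ∈ Bᶜ, rate G B u * adj G u v * adj G w v

/-- second error term -/
noncomputable def X2 (D : ℝ) (G : SimpleGraph V) (B : Finset V) : ℝ :=
  ∑ v ∈ Bᶜ, ∑ v' ∈ Bᶜ, ∑ u ∈ B, ∑ u' ∈ B,
    (rate G B u * adj G u v) * (rate G B u' * adj G u' v') * di D G v' * adj G v' v

theorem ra_nonneg (G : SimpleGraph V) (B : Finset V) (u v : V) :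
    0 ≤ rate G B u * adj G u v := mul_nonneg (rate_nonneg G B u) (adj_nonneg G u v)

theorem quenched (D s : ℝ) (G : SimpleGraph V) (B : Finset V) :
    ∑ B', st G B B' * Phi D s G B' ≤ 4 * Psi G B + 2 * X1 G B + X2 D G B := by
  have h1 : ∀ B', st G B B' * Phi D s G B' ≤ 
      Psi G B * st G B B' + ∑ v ∈ Bᶜ, st G B B' * (if v ∈ B' then (1 : ℝ) else 0)
      + 2 * ∑ v ∈ Bᶜ, ∑ w ∈ B, adj G w v * (st G B B' * (if v ∈ B' then (1 : ℝ) else 0))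
      + ∑ v ∈ Bᶜ, ∑ v' ∈ Bᶜ, di D G v' * adj G v' v * (st G B B' *
        ((if v ∈ B' then (1 : ℝ) else 0) * (if v' ∈ B' then (1 : ℝ) else 0))) := by
    intro B'
    by_cases h : B ⊆ B'
    · refine (mul_le_mul_of_nonneg_left (Phi_pointwise D s G B B' h) (st_nonneg G B B')).trans ?_
      apply le_of_eq
      simp only [mul_add, Finset.mul_sum]
      congr 1
      · congr 1
        · congr 1
          ring
        · apply Finset.sum_congr rfl; intro v _
          apply Finset.sum_congr rfl; intro w _
          ring
      · apply Finset.sum_congr rfl; intro v _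
        apply Finset.sum_congr rfl; intro w _
        ring
    · simp [st_zero G B B' h]
  refine (Finset.sum_le_sum fun B' _ => h1 B').trans ?_
  rw [Finset.sum_add_distrib, Finset.sum_add_distrib, Finset.sum_add_distrib, ← Finset.mul_sum,
    ← Finset.mul_sum, st_sum_one, mul_one]
  have a1 : ∑ B', ∑ v ∈ Bᶜ, st G B B' * (if v ∈ B' then (1 : ℝ) else 0) ≤ Psi G B := by
    rw [Finset.sum_comm]
    refine le_trans (le_of_eq ?_) (av_sum_le G B)
    exact Finset.sum_congr rfl fun v hv => st_sum_mem G B v (Finset.mem_compl.1 hv)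
  have a2 : ∑ B', ∑ v ∈ Bᶜ, ∑ w ∈ B, adj G w v * (st G B B' * (if v ∈ B' then (1 : ℝ) else 0))
      ≤ Psi G B + X1 G B := by
    rw [Finset.sum_comm]
    have : ∀ v ∈ Bᶜ, ∑ B', ∑ w ∈ B, adj G w v * (st G B B' * (if v ∈ B' then (1 : ℝ) else 0))
        ≤ ∑ w ∈ B, (rate G B w * adj G w v
          + ∑ u ∈ B.erase w, rate G B u * adj G u v * adj G w v) := by
      intro v hv
      rw [Finset.mem_compl] at hv
      rw [Finset.sum_comm]
      apply Finset.sum_le_sum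
      intro w hw
      rw [← Finset.mul_sum, st_sum_mem G B v hv]
      refine (mul_le_mul_of_nonneg_left (av_le G B v hv) (adj_nonneg G w v)).trans ?_
      rw [← Finset.add_sum_erase B _ hw, mul_add, Finset.mul_sum]
      apply add_le_add
      · nlinarith [ra_nonneg G B w v, adj_le_one G w v]
      · apply le_of_eq
        exact Finset.sum_congr rfl fun u _ => mul_comm _ _
    refine (Finset.sum_le_sum this).trans ?_
    simp only [Finset.sum_add_distrib]
    apply add_le_add
    · rw [Finset.sum_comm]; exact rate_sum_sum_le G B
    · apply le_of_eq
      rw [X1, Finset.sum_comm]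
      apply Finset.sum_congr rfl
      intro w _
      rw [Finset.sum_comm]
  have a3 : ∑ B', ∑ v ∈ Bᶜ, ∑ v' ∈ Bᶜ, di D G v' * adj G v' v * (st G B B' *
        ((if v ∈ B' then (1 : ℝ) else 0) * (if v' ∈ B' then (1 : ℝ) else 0))) ≤ X2 D G B := by
    rw [Finset.sum_comm, X2]
    apply Finset.sum_le_sum
    intro v hv
    rw [Finset.sum_comm]
    apply Finset.sum_le_sum
    intro v' hv'
    rw [Finset.mem_compl] at hv hv'
    rw [← Finset.mul_sum]
    by_cases hvv : v = v'
    · subst hvv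
      simp [adj_self]
    rw [st_sum_mem2 G B v v' hv hv' hvv]
    have h2 : av G B v * av G B v' ≤ (∑ u ∈ B, rate G B u * adj G u v)
        * (∑ u ∈ B, rate G B u * adj G u v') :=
      mul_le_mul (av_le G B v hv) (av_le G B v' hv') (av_nonneg G B v')
        (Finset.sum_nonneg fun u _ => ra_nonneg G B u v)
    refine (mul_le_mul_of_nonneg_left h2 (mul_nonneg (di_nonneg D G v') (adj_nonneg G v' v))).trans ?_
    apply le_of_eq
    rw [Finset.sum_mul_sum, Finset.mul_sum]
    apply Finset.sum_congr rfl
    intro u _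
    rw [Finset.mul_sum]
    apply Finset.sum_congr rfl
    intro u' _
    ring
  linarith

/-- good indicator -/
noncomputable def gd (D s : ℝ) (G : SimpleGraph V) (B : Finset V) : ℝ :=
  if DegOK D G B ∧ Psi G B < s then 1 else 0

theorem gd_nonneg (D s : ℝ) (G : SimpleGraph V) (B : Finset V) : 0 ≤ gd D s G B := by
  unfold gd; split_ifs <;> norm_num

theorem Agree.gd_eq {B : Finset V} {G G' : SimpleGraph V} (h : Agree B G G') (D s : ℝ) :
    gd D s G B = gd D s G' B := by
  have : DegOK D G B ↔ DegOK D G' B := by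
    unfold DegOK
    constructor
    · intro k w hw; rw [← h.2 w hw]; exact k w hw
    · intro k w hw; rw [h.2 w hw]; exact k w hw
  simp [gd, this, h.Psi_eq]

theorem quenched_all (D s : ℝ) (hs : 0 ≤ s) (G : SimpleGraph V) (B : Finset V) :
    ∑ B', st G B B' * Phi D s G B'
      ≤ 4 * Phi D s G B + gd D s G B * (2 * X1 G B + X2 D G B) := by
  by_cases hok : DegOK D G B
  · by_cases hp : Psi G B < s
    · have h1 : gd D s G B = 1 := by simp [gd, hok, hp]
      have h2 : Phi D s G B = Psi G B := by simp [Phi, hok, hp.le]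
      rw [h1, h2]
      linarith [quenched D s G B]
    · have h1 : gd D s G B = 0 := by simp [gd, hp]
      have h2 : Phi D s G B = s := by simp [Phi, hok, not_lt.1 hp]
      rw [h1, h2]
      have : ∑ B', st G B B' * Phi D s G B' ≤ ∑ B', st G B B' * s :=
        Finset.sum_le_sum fun B' _ => mul_le_mul_of_nonneg_left (Phi_le D s hs G B')
          (st_nonneg G B B')
      rw [← Finset.sum_mul, st_sum_one] at this
      linarith
  · have h1 : gd D s G B = 0 := by simp [gd, hok]
    have h2 : Phi D s G B = 0 := by simp [Phi, hok]
    rw [h1, h2]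
    simp only [mul_zero, zero_mul, add_zero]
    apply le_of_eq
    apply Finset.sum_eq_zero
    intro B' _
    by_cases h : B ⊆ B'
    · have : ¬ DegOK D G B' := fun k => hok fun w hw => k w (h hw)
      simp [Phi, this]
    · simp [st_zero G B B' h]

theorem gd_mul (D s : ℝ) (G : SimpleGraph V) (B : Finset V) :
    gd D s G B * Psi G B ≤ gd D s G B * Phi D s G B := by
  unfold gd
  split_ifs with h
  · simp [Phi, h.1, h.2.le]
  · simp

theorem gd_le_Phi (D s : ℝ) (hs : 0 ≤ s) (G : SimpleGraph V) (B : Finset V) :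
    gd D s G B * Psi G B ≤ Phi D s G B := by
  refine (gd_mul D s G B).trans ?_
  have : gd D s G B ≤ 1 := by unfold gd; split_ifs <;> norm_num
  nlinarith [Phi_nonneg D s hs G B]

section annealed

theorem X1_term (er : SimpleGraph V → ℝ) (her0 : ∀ G, 0 ≤ er G)
    (her : ∀ G G' : SimpleGraph V, G.edgeSet.ncard = G'.edgeSet.ncard → er G = er G')
    (S : Finset V) (t : ℕ) (D s : ℝ) (hD : 0 ≤ D) (hs : 0 ≤ s) (B : Finset V) :
    (Fintype.card V - s - 2 - D) * ∑ G, er G * (mu G S t B * (gd D s G B * X1 G B))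
      ≤ D * s * ∑ G, er G * (mu G S t B * Phi D s G B) := by
  have e : ∑ G, er G * (mu G S t B * (gd D s G B * X1 G B))
      = ∑ w ∈ B, ∑ u ∈ B.erase w, ∑ v ∈ Bᶜ, ∑ G,
        er G * (mu G S t B * gd D s G B * (rate G B u * adj G u v)) * adj G w v := by
    simp only [X1, Finset.mul_sum]
    rw [Finset.sum_comm]
    apply Finset.sum_congr rfl; intro w _
    rw [Finset.sum_comm]
    apply Finset.sum_congr rfl; intro u _
    rw [Finset.sum_comm]
    apply Finset.sum_congr rfl; intro v _
    apply Finset.sum_congr rfl; intro G _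
    ring
  have h1 : ∀ w ∈ B, ∀ u ∈ B.erase w, ∀ v ∈ Bᶜ,
      (Fintype.card V - s - 2 - D) * ∑ G,
        er G * (mu G S t B * gd D s G B * (rate G B u * adj G u v)) * adj G w v
      ≤ D * ∑ G, er G * (mu G S t B * gd D s G B * (rate G B u * adj G u v)) := by
    intro w hw u hu v hv
    rw [Finset.mem_compl] at hv
    rw [Finset.mem_erase] at hu
    have hwv : w ≠ v := fun h => hv (h ▸ hw)
    apply switch er her0 her
      (fun G => mu G S t B * gd D s G B * (rate G B u * adj G u v)) _ w v hwv B D s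
    · intro G x hx hxv hxw
      have hA := sw_agree G hwv (fun h => hxw h.symm) B hv hx
      rw [hA.mu_eq, hA.gd_eq, hA.rate_eq hu.2, adj, adj, sw_adj_ne G hwv (fun h => hxw h.symm) u v hu.1
        (fun h => hv (h ▸ hu.2)) (fun h => hx (h ▸ hu.2))]
    · intro G hG
      have : gd D s G B ≠ 0 := by
        intro h; apply hG; simp [h]
      have : DegOK D G B ∧ Psi G B < s := by
        by_contra h; exact this (by simp [gd, h])
      exact ⟨this.1 w hw, (card_le_Psi G B).trans this.2.le⟩
    · intro G
      exact mul_nonneg (mul_nonneg (mu_nonneg G S t B) (gd_nonneg D s G B)) (ra_nonneg G B u v)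
  rw [e, Finset.mul_sum]
  calc _ ≤ ∑ w ∈ B, ∑ u ∈ B, ∑ v ∈ Bᶜ,
        D * ∑ G, er G * (mu G S t B * gd D s G B * (rate G B u * adj G u v)) := by
        apply Finset.sum_le_sum; intro w hw
        rw [Finset.mul_sum]
        have : ∑ u ∈ B.erase w, ∑ v ∈ Bᶜ,
          D * ∑ G, er G * (mu G S t B * gd D s G B * (rate G B u * adj G u v))
          ≤ ∑ u ∈ B, ∑ v ∈ Bᶜ,
          D * ∑ G, er G * (mu G S t B * gd D s G B * (rate G B u * adj G u v)) := by
          apply Finset.sum_le_sum_of_subset_of_nonneg (Finset.erase_subset w B)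
          intro u _ _
          exact Finset.sum_nonneg fun v _ => mul_nonneg hD (Finset.sum_nonneg fun G _ =>
            mul_nonneg (her0 G) (mul_nonneg (mul_nonneg (mu_nonneg G S t B) (gd_nonneg D s G B))
              (ra_nonneg G B u v)))
        refine le_trans ?_ this
        apply Finset.sum_le_sum; intro u hu
        rw [Finset.mul_sum]
        apply Finset.sum_le_sum; intro v hv
        exact h1 w hw u hu v hv
    _ = ∑ G, D * (B.card * (er G * (mu G S t B * (gd D s G B *
          ∑ u ∈ B, ∑ v ∈ Bᶜ, rate G B u * adj G u v)))) := by
        rw [Finset.sum_const, nsmul_eq_mul]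
        simp only [Finset.mul_sum]
        symm
        rw [Finset.sum_comm]
        apply Finset.sum_congr rfl; intro u _
        rw [Finset.sum_comm]
        apply Finset.sum_congr rfl; intro v _
        apply Finset.sum_congr rfl; intro G _
        ring
    _ ≤ _ := by
        rw [Finset.mul_sum]
        apply Finset.sum_le_sum; intro G _
        have hk : (B.card : ℝ) * (gd D s G B * ∑ u ∈ B, ∑ v ∈ Bᶜ, rate G B u * adj G u v)
            ≤ s * Phi D s G B := by
          by_cases hg : gd D s G B = 0
          · rw [hg]; simp; exact mul_nonneg hs (Phi_nonneg D s hs G B)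
          · have : DegOK D G B ∧ Psi G B < s := by
              by_contra h; exact hg (by simp [gd, h])
            apply mul_le_mul ((card_le_Psi G B).trans this.2.le) _ _ hs
            · exact (mul_le_mul_of_nonneg_left (rate_sum_sum_le G B) (gd_nonneg D s G B)).trans
                (gd_le_Phi D s hs G B)
            · exact mul_nonneg (gd_nonneg D s G B) (Finset.sum_nonneg fun u _ =>
                Finset.sum_nonneg fun v _ => ra_nonneg G B u v)
        have := mul_le_mul_of_nonneg_left hk
          (mul_nonneg hD (mul_nonneg (her0 G) (mu_nonneg G S t B)))
        refine le_trans (le_of_eq ?_) (this.trans (le_of_eq ?_)) <;> ring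

theorem X2_term (er : SimpleGraph V → ℝ) (her0 : ∀ G, 0 ≤ er G)
    (her : ∀ G G' : SimpleGraph V, G.edgeSet.ncard = G'.edgeSet.ncard → er G = er G')
    (S : Finset V) (t : ℕ) (D s : ℝ) (hD : 0 ≤ D) (hs : 0 ≤ s) (B : Finset V) :
    (Fintype.card V - s - 2 - D) * ∑ G, er G * (mu G S t B * (gd D s G B * X2 D G B))
      ≤ D * s * ∑ G, er G * (mu G S t B * Phi D s G B) := by
  have e : ∑ G, er G * (mu G S t B * (gd D s G B * X2 D G B))
      = ∑ v ∈ Bᶜ, ∑ v' ∈ Bᶜ, ∑ u ∈ B, ∑ u' ∈ B, ∑ G,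
        er G * (mu G S t B * gd D s G B * ((rate G B u * adj G u v)
          * (rate G B u' * adj G u' v')) * di D G v') * adj G v' v := by
    simp only [X2, Finset.mul_sum]
    rw [Finset.sum_comm]
    apply Finset.sum_congr rfl; intro v _
    rw [Finset.sum_comm]
    apply Finset.sum_congr rfl; intro v' _
    rw [Finset.sum_comm]
    apply Finset.sum_congr rfl; intro u _
    rw [Finset.sum_comm]
    apply Finset.sum_congr rfl; intro u' _
    apply Finset.sum_congr rfl; intro G _
    ring
  have h0 : ∀ G u u' v v', 0 ≤ mu G S t B * gd D s G B * ((rate G B u * adj G u v)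
          * (rate G B u' * adj G u' v')) := fun G u u' v v' => 
    mul_nonneg (mul_nonneg (mu_nonneg G S t B) (gd_nonneg D s G B))
      (mul_nonneg (ra_nonneg G B u v) (ra_nonneg G B u' v'))
  have h1 : ∀ v ∈ Bᶜ, ∀ v' ∈ Bᶜ, ∀ u ∈ B, ∀ u' ∈ B,
      (Fintype.card V - s - 2 - D) * ∑ G,
        er G * (mu G S t B * gd D s G B * ((rate G B u * adj G u v)
          * (rate G B u' * adj G u' v')) * di D G v') * adj G v' v
      ≤ D * ∑ G, er G * (mu G S t B * gd D s G B * ((rate G B u * adj G u v)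
          * (rate G B u' * adj G u' v'))) := by
    intro v hv v' hv' u hu u' hu'
    rw [Finset.mem_compl] at hv hv'
    by_cases hvv : v' = v
    · subst hvv
      simp only [adj_self, mul_zero, Finset.sum_const_zero]
      exact mul_nonneg hD (Finset.sum_nonneg fun G _ => mul_nonneg (her0 G) (h0 G u u' v' v'))
    refine (switch er her0 her
      (fun G => mu G S t B * gd D s G B * ((rate G B u * adj G u v)
          * (rate G B u' * adj G u' v')) * di D G v') ?_ v' v hvv B D s ?_ ?_).trans ?_
    · intro G
      exact mul_nonneg (h0 G u u' v v') (di_nonneg D G v')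
    · intro G x hx hxv hxw
      have hxw' : v' ≠ x := fun h => hxw h.symm
      have hA := sw_agree G hvv hxw' B hv hx
      have hne : ∀ a ∈ B, ∀ b, b ∉ B → a ≠ b := fun a ha b hb h => hb (h ▸ ha)
      rw [hA.mu_eq, hA.gd_eq, hA.rate_eq hu, hA.rate_eq hu', di, di, sw_deg G hvv hxw' v' hvv hxw']
      simp only [adj]
      rw [sw_adj_ne G hvv hxw' u v (hne u hu _ hv') (hne u hu _ hv) (hne u hu _ hx),
        sw_adj_ne G hvv hxw' u' v' (hne u' hu' _ hv') (hne u' hu' _ hv) (hne u' hu' _ hx)]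
    · intro G hG
      have h2 : gd D s G B ≠ 0 := by
        intro h; apply hG; simp [h]
      have h3 : DegOK D G B ∧ Psi G B < s := by
        by_contra h; exact h2 (by simp [gd, h])
      refine ⟨?_, (card_le_Psi G B).trans h3.2.le⟩
      by_contra h
      apply hG
      simp [di, h]
    · apply mul_le_mul_of_nonneg_left _ hD
      apply Finset.sum_le_sum; intro G _
      apply mul_le_mul_of_nonneg_left _ (her0 G)
      exact mul_le_of_le_one_right (h0 G u u' v v') (di_le_one D G v')
  rw [e]
  calc _ ≤ ∑ v ∈ Bᶜ, ∑ v' ∈ Bᶜ, ∑ u ∈ B, ∑ u' ∈ B,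
        D * ∑ G, er G * (mu G S t B * gd D s G B * ((rate G B u * adj G u v)
          * (rate G B u' * adj G u' v'))) := by
        rw [Finset.mul_sum]
        apply Finset.sum_le_sum; intro v hv
        rw [Finset.mul_sum]
        apply Finset.sum_le_sum; intro v' hv'
        rw [Finset.mul_sum]
        apply Finset.sum_le_sum; intro u hu
        rw [Finset.mul_sum]
        apply Finset.sum_le_sum; intro u' hu'
        exact h1 v hv v' hv' u hu u' hu'
    _ = ∑ G, D * (er G * (mu G S t B * (gd D s G B *
          ((∑ v ∈ Bᶜ, ∑ u ∈ B, rate G B u * adj G u v) *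
            (∑ v' ∈ Bᶜ, ∑ u' ∈ B, rate G B u' * adj G u' v'))))) := by
        simp only [Finset.sum_mul_sum]
        simp only [Finset.mul_sum]
        symm
        rw [Finset.sum_comm]
        apply Finset.sum_congr rfl; intro v _
        rw [Finset.sum_comm]
        apply Finset.sum_congr rfl; intro v' _
        rw [Finset.sum_comm]
        apply Finset.sum_congr rfl; intro u _
        rw [Finset.sum_comm]
        apply Finset.sum_congr rfl; intro u' _
        apply Finset.sum_congr rfl; intro G _
        ring
    _ ≤ _ := by
        rw [Finset.mul_sum]
        apply Finset.sum_le_sum; intro G _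
        have hR : ∑ v ∈ Bᶜ, ∑ u ∈ B, rate G B u * adj G u v ≤ Psi G B := by
          rw [Finset.sum_comm]; exact rate_sum_sum_le G B
        have hR0 : 0 ≤ ∑ v ∈ Bᶜ, ∑ u ∈ B, rate G B u * adj G u v :=
          Finset.sum_nonneg fun u _ => Finset.sum_nonneg fun v _ => ra_nonneg G B _ _
        set R := ∑ v ∈ Bᶜ, ∑ u ∈ B, rate G B u * adj G u v
        have hk : gd D s G B * (R * R) ≤ s * Phi D s G B := by
          by_cases hg : gd D s G B = 0
          · rw [hg]; simp; exact mul_nonneg hs (Phi_nonneg D s hs G B)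
          · have h3 : DegOK D G B ∧ Psi G B < s := by
              by_contra h; exact hg (by simp [gd, h])
            have h4 := gd_le_Phi D s hs G B
            have h5 : gd D s G B * (R * R) ≤ gd D s G B * (s * Psi G B) :=
              mul_le_mul_of_nonneg_left (mul_le_mul (hR.trans h3.2.le) hR hR0 hs)
                (gd_nonneg D s G B)
            have h6 := mul_le_mul_of_nonneg_left h4 hs
            linarith
        have := mul_le_mul_of_nonneg_left hk
          (mul_nonneg hD (mul_nonneg (her0 G) (mu_nonneg G S t B)))
        refine le_trans (le_of_eq ?_) (this.trans (le_of_eq ?_)) <;> ring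

theorem annealed_step (er : SimpleGraph V → ℝ) (her0 : ∀ G, 0 ≤ er G)
    (her : ∀ G G' : SimpleGraph V, G.edgeSet.ncard = G'.edgeSet.ncard → er G = er G')
    (S : Finset V) (t : ℕ) (D s : ℝ) (hD : 0 ≤ D) (hs : 0 ≤ s)
    (hc : 0 < Fintype.card V - s - 2 - D) :
    ∑ G, er G * ∑ B, mu G S (t + 1) B * Phi D s G B
      ≤ (4 + 3 * (D * s / (Fintype.card V - s - 2 - D)))
        * ∑ G, er G * ∑ B, mu G S t B * Phi D s G B := by
  set c : ℝ := Fintype.card V - s - 2 - D with hcdef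
  have h1 : ∀ G, er G * ∑ B, mu G S (t + 1) B * Phi D s G B ≤
      ∑ B, (4 * (er G * (mu G S t B * Phi D s G B))
        + 2 * (er G * (mu G S t B * (gd D s G B * X1 G B)))
        + er G * (mu G S t B * (gd D s G B * X2 D G B))) := by
    intro G
    rw [mu_succ_sum, Finset.mul_sum]
    apply Finset.sum_le_sum
    intro B _
    have := mul_le_mul_of_nonneg_left (quenched_all D s hs G B)
      (mul_nonneg (her0 G) (mu_nonneg G S t B))
    refine le_trans (le_of_eq ?_) (this.trans (le_of_eq ?_)) <;> ring
  refine (Finset.sum_le_sum fun G _ => h1 G).trans ?_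
  rw [Finset.sum_comm]
  simp only [Finset.mul_sum (s := (Finset.univ : Finset (Finset V)))]
  rw [Finset.sum_comm (f := fun G B => er G * (mu G S t B * Phi D s G B)), Finset.mul_sum]
  apply Finset.sum_le_sum
  intro B _
  rw [Finset.sum_add_distrib, Finset.sum_add_distrib, ← Finset.mul_sum, ← Finset.mul_sum]
  have k1 := X1_term er her0 her S t D s hD hs B
  have k2 := X2_term er her0 her S t D s hD hs B
  rw [← hcdef] at k1 k2
  have k1' := (le_div_iff₀' hc).2 k1
  have k2' := (le_div_iff₀' hc).2 k2
  rw [mul_div_right_comm] at k1' k2'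
  linarith

theorem annealed (er : SimpleGraph V → ℝ) (her0 : ∀ G, 0 ≤ er G)
    (her : ∀ G G' : SimpleGraph V, G.edgeSet.ncard = G'.edgeSet.ncard → er G = er G')
    (hsum : ∑ G, er G = 1)
    (x : V) (t : ℕ) (D s : ℝ) (hD : 0 ≤ D) (hs : 0 ≤ s)
    (hc : 0 < Fintype.card V - s - 2 - D) :
    ∑ G, er G * ∑ B, mu G {x} t B * Phi D s G B
      ≤ (4 + 3 * (D * s / (Fintype.card V - s - 2 - D))) ^ t := by
  induction t with
  | zero =>
    rw [pow_zero, ← hsum]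
    apply Finset.sum_le_sum
    intro G _
    have : ∑ B, mu G {x} 0 B * Phi D s G B ≤ 1 := by
      have e : ∑ B, mu G {x} 0 B * Phi D s G B = Phi D s G {x} := by simp [mu]
      rw [e]
      have : Psi G {x} ≤ 1 := (Psi_le_sq G {x}).trans (by simp)
      unfold Phi
      split_ifs
      · exact (min_le_left _ _).trans this
      · norm_num
    exact mul_le_of_le_one_right (her0 G) this
  | succ t ih =>
    refine (annealed_step er her0 her {x} t D s hD hs hc).trans ?_
    rw [pow_succ, mul_comm]
    exact mul_le_mul_of_nonneg_right ih (by positivity)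

theorem annealed_final (er : SimpleGraph V → ℝ) (her0 : ∀ G, 0 ≤ er G)
    (her : ∀ G G' : SimpleGraph V, G.edgeSet.ncard = G'.edgeSet.ncard → er G = er G')
    (hsum : ∑ G, er G = 1)
    (x : V) (t : ℕ) (D s : ℝ) (hD : 0 ≤ D) (hs : 0 < s)
    (hc : 0 < Fintype.card V - s - 2 - D) :
    ∑ G, er G * mu G {x} t Finset.univ
      ≤ (4 + 3 * (D * s / (Fintype.card V - s - 2 - D))) ^ t / s
        + ∑ w : V, ∑ G, er G * (if D < (deg G w : ℝ) then 1 else 0) := by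
  have h := annealed er her0 her hsum x t D s hD hs.le hc
  have h2 := div_le_div_of_nonneg_right h hs.le
  refine le_trans ?_ (add_le_add_left h2 _)
  rw [Finset.sum_comm, Finset.sum_div, ← Finset.sum_add_distrib]
  apply Finset.sum_le_sum
  intro G _
  rw [← Finset.mul_sum, mul_div_assoc, ← mul_add]
  apply mul_le_mul_of_nonneg_left _ (her0 G)
  have hsn : 0 ≤ ∑ w : V, (if D < (deg G w : ℝ) then (1 : ℝ) else 0) :=
    Finset.sum_nonneg fun w _ => by split_ifs <;> norm_num
  have hPn : 0 ≤ ∑ B, mu G {x} t B * Phi D s G B :=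
    Finset.sum_nonneg fun B _ => mul_nonneg (mu_nonneg G {x} t B) (Phi_nonneg D s hs.le G B)
  by_cases hok : DegOK D G Finset.univ
  · have h3 : mu G {x} t Finset.univ * Phi D s G Finset.univ
        ≤ ∑ B, mu G {x} t B * Phi D s G B :=
      Finset.single_le_sum (f := fun B => mu G {x} t B * Phi D s G B)
        (fun B _ => mul_nonneg (mu_nonneg G {x} t B) (Phi_nonneg D s hs.le G B))
        (Finset.mem_univ _)
    have h4 : Phi D s G Finset.univ = s := by
      have := card_le_Psi G Finset.univ
      rw [Finset.card_univ] at this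
      rw [Phi, if_pos hok, min_eq_right]
      linarith
    rw [h4] at h3
    have := (le_div_iff₀ hs).2 h3
    linarith
  · unfold DegOK at hok
    push Not at hok
    obtain ⟨w, _, hw⟩ := hok
    have h5 : (1 : ℝ) ≤ ∑ w : V, (if D < (deg G w : ℝ) then (1 : ℝ) else 0) := by
      have := Finset.single_le_sum (f := fun w : V => if D < (deg G w : ℝ) then (1 : ℝ) else 0)
        (fun w _ => by split_ifs <;> norm_num) (Finset.mem_univ w)
      simpa [hw] using this
    have := mu_le_one G {x} t Finset.univ
    have := div_nonneg hPn hs.le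
    linarith

end annealed

end helpers

theorem er_gen (n : ℕ) (p : ℝ) (a : Sym2 (Fin n) → ℝ) :
    ∑ G : SimpleGraph (Fin n), erProb n p G * ∏ e ∈ G.edgeFinset, a e
      = ∏ e ∈ (⊤ : SimpleGraph (Fin n)).edgeFinset, (p * a e + (1 - p)) := by
  rw [Finset.prod_add]
  refine Finset.sum_bij' (fun G _ => G.edgeFinset)
    (fun t _ => SimpleGraph.fromEdgeSet (t : Set (Sym2 (Fin n)))) ?_ ?_ ?_ ?_ ?_
  · intro G _
    rw [Finset.mem_powerset]
    exact SimpleGraph.edgeFinset_mono le_top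
  · intros; simp
  · intro G _
    simp
  · intro t ht
    rw [Finset.mem_powerset] at ht
    ext e
    simp only [SimpleGraph.mem_edgeFinset, SimpleGraph.edgeSet_fromEdgeSet]
    constructor
    · exact fun h => h.1
    · intro h
      refine ⟨h, ?_⟩
      have := ht h
      rw [SimpleGraph.mem_edgeFinset] at this
      exact SimpleGraph.not_isDiag_of_mem_edgeSet _ this
  · intro G _
    have hsub : G.edgeFinset ⊆ (⊤ : SimpleGraph (Fin n)).edgeFinset :=
      SimpleGraph.edgeFinset_mono le_top
    have hn : G.edgeSet.ncard = G.edgeFinset.card := by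
      rw [← SimpleGraph.coe_edgeFinset, Set.ncard_coe_finset]
    have htop : (⊤ : SimpleGraph (Fin n)).edgeFinset.card = n.choose 2 := by
      have := SimpleGraph.card_edgeFinset_top_eq_card_choose_two (V := Fin n)
      rw [Fintype.card_fin] at this
      rw [← this]
    rw [Finset.prod_mul_distrib, Finset.prod_const, Finset.prod_const,
      Finset.card_sdiff_of_subset hsub, erProb, hn, htop]
    ring

theorem er_sum (n : ℕ) (p : ℝ) : ∑ G : SimpleGraph (Fin n), erProb n p G = 1 := by
  have := er_gen n p (fun _ => 1)
  simpa using this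

theorem deg_prod {n : ℕ} (G : SimpleGraph (Fin n)) (w : Fin n) (x : ℝ) :
    ∏ e ∈ G.edgeFinset, (if w ∈ e then x else 1) = x ^ deg G w := by
  rw [← Finset.prod_filter, Finset.prod_const]
  congr 1
  rw [← SimpleGraph.incidenceFinset_eq_filter, SimpleGraph.card_incidenceFinset_eq_degree, deg,
    ← SimpleGraph.card_neighborFinset_eq_degree, Set.ncard_eq_toFinset_card']
  congr

theorem er_deg (n : ℕ) (p : ℝ) (hp : 0 ≤ p) (w : Fin n) :
    ∑ G : SimpleGraph (Fin n), erProb n p G * (2 : ℝ) ^ deg G w ≤ (1 + p) ^ n := by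
  have h := er_gen n p (fun e => if w ∈ e then 2 else 1)
  simp only [deg_prod] at h
  rw [h]
  have : ∀ e ∈ (⊤ : SimpleGraph (Fin n)).edgeFinset, (p * (if w ∈ e then (2 : ℝ) else 1) + (1 - p))
      = if w ∈ e then 1 + p else 1 := by
    intro e _; split_ifs <;> ring
  have h5 : ∏ e ∈ (⊤ : SimpleGraph (Fin n)).edgeFinset, (if w ∈ e then 1 + p else 1)
      = (1 + p) ^ deg (⊤ : SimpleGraph (Fin n)) w := by
    convert deg_prod (⊤ : SimpleGraph (Fin n)) w (1 + p)
  rw [Finset.prod_congr rfl this, h5]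
  apply pow_le_pow_right₀ (by linarith)
  have : deg (⊤ : SimpleGraph (Fin n)) w ≤ (Set.univ : Set (Fin n)).ncard :=
    Set.ncard_le_ncard (Set.subset_univ _)
  simpa [Set.ncard_univ] using this

theorem er_nonneg (n : ℕ) (p : ℝ) (hp : 0 ≤ p) (hp1 : p ≤ 1) (G : SimpleGraph (Fin n)) :
    0 ≤ erProb n p G := by
  have : 0 ≤ 1 - p := by linarith
  unfold erProb; positivity

theorem er_deg_tail (n : ℕ) (p : ℝ) (hp : 0 ≤ p) (hp1 : p ≤ 1) (w : Fin n) :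
    ∑ G : SimpleGraph (Fin n), erProb n p G * (if 4 * (n * p) < (deg G w : ℝ) then (1 : ℝ) else 0)
      ≤ Real.exp (- (n * p)) := by
  have h := er_deg n p hp w
  have h1 : ∑ G : SimpleGraph (Fin n), erProb n p G *
      (if 4 * (n * p) < (deg G w : ℝ) then (1 : ℝ) else 0)
      ≤ ∑ G : SimpleGraph (Fin n), erProb n p G * (2 : ℝ) ^ deg G w * (2 : ℝ) ^ (-(4 * (n * p))) := by
    apply Finset.sum_le_sum
    intro G _
    rw [mul_assoc]
    apply mul_le_mul_of_nonneg_left _ (er_nonneg n p hp hp1 G)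
    split_ifs with hd
    · rw [← Real.rpow_natCast, ← Real.rpow_add (by norm_num)]
      exact Real.one_le_rpow (by norm_num) (by linarith)
    · positivity
  refine h1.trans ?_
  rw [← Finset.sum_mul]
  have h2 : (1 + p) ^ n ≤ Real.exp (n * p) := by
    rw [Real.exp_nat_mul]
    apply pow_le_pow_left₀ (by linarith)
    linarith [Real.add_one_le_exp p]
  have hl : (0.69 : ℝ) < Real.log 2 := by have := Real.log_two_gt_d9; linarith
  have h3 : (2 : ℝ) ^ (-(4 * (n * p))) ≤ Real.exp (-(2 * (n * p))) := by
    rw [Real.rpow_def_of_pos (by norm_num)]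
    apply Real.exp_le_exp.2
    have : 0 ≤ (n : ℝ) * p := by positivity
    nlinarith
  calc _ ≤ Real.exp (n * p) * Real.exp (-(2 * (n * p))) :=
        mul_le_mul (h.trans h2) h3 (by positivity) (by positivity)
    _ = _ := by rw [← Real.exp_add]; congr 1; ring

/-- First bound. -/
theorem pr_bound1 (n : ℕ) (p : ℝ) (hp : 0 ≤ p) (hp1 : p ≤ 1) (v : Fin n) (ℓ : ℕ) :
    prPZFwithin n p v ℓ * Real.log n ≤ 2 ^ ℓ * Real.log 2 := by
  unfold prPZFwithin
  rw [Finset.sum_mul]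
  calc _ ≤ ∑ G : SimpleGraph (Fin n), erProb n p G * (2 ^ ℓ * Real.log 2) := by
        apply Finset.sum_le_sum
        intro G _
        rw [probAllBlue_eq, mul_assoc]
        apply mul_le_mul_of_nonneg_left _ (er_nonneg n p hp hp1 G)
        simpa using allBlue_log G v ℓ
    _ = _ := by rw [← Finset.sum_mul, er_sum, one_mul]

theorem pr_nonneg (n : ℕ) (p : ℝ) (hp : 0 ≤ p) (hp1 : p ≤ 1) (v : Fin n) (ℓ : ℕ) :
    0 ≤ prPZFwithin n p v ℓ := by
  unfold prPZFwithin
  refine Finset.sum_nonneg fun G _ => mul_nonneg (er_nonneg n p hp hp1 G) ?_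
  rw [probAllBlue_eq]
  exact mu_nonneg _ _ _ _

/-- Second bound. -/
theorem pr_bound2 (n : ℕ) (p : ℝ) (hp : 0 < p) (hp1 : p ≤ 1 / 16) (v : Fin n) (ℓ : ℕ) (M : ℝ)
    (hM : 1 ≤ M) (hℓ : (ℓ : ℝ) ≤ M) (hn : 32 ≤ n) (hnp : 16 ≤ n * p)
    (hlog : 2 * Real.log n ≤ n * p) :
    prPZFwithin n p v ℓ ≤ Real.exp 6 * 4 ^ ℓ * (p * M) + 1 / n := by
  have hn' : (32 : ℝ) ≤ n := by exact_mod_cast hn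
  have hM0 : 0 < M := by linarith
  set D : ℝ := 4 * (n * p) with hD
  set s : ℝ := 1 / (p * M) with hs
  have hs0 : 0 < s := by positivity
  have hsn : s ≤ n / 16 := by
    rw [hs, div_le_iff₀ (by positivity)]
    nlinarith
  have hDn : D ≤ n / 4 := by rw [hD]; nlinarith
  have hD0 : 0 ≤ D := by positivity
  have hc : (n : ℝ) / 2 ≤ (n : ℝ) - s - 2 - D := by linarith
  have hc0 : 0 < (n : ℝ) - s - 2 - D := by linarith
  have h := annealed_final (erProb n p) (er_nonneg n p hp.le (by linarith))
    (fun G G' hG => by unfold erProb; rw [hG]) (er_sum n p) v ℓ D s hD0 hs0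
    (by simpa using hc0)
  rw [Fintype.card_fin] at h
  have e : prPZFwithin n p v ℓ = ∑ G, erProb n p G * mu G {v} ℓ Finset.univ := by
    unfold prPZFwithin
    exact Finset.sum_congr rfl fun G _ => by rw [probAllBlue_eq]
  rw [e]
  refine h.trans (add_le_add ?_ ?_)
  · have h1 : D * s / (n - s - 2 - D) ≤ 8 / M := by
      have : D * s = 4 * n / M := by rw [hD, hs]; field_simp
      rw [this, div_le_iff₀ hc0]
      calc 4 * n / M = 8 / M * (n / 2) := by ring
        _ ≤ _ := by gcongr
    have h2 : 4 + 3 * (D * s / (n - s - 2 - D)) ≤ 4 * Real.exp (6 / M) := by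
      have := Real.add_one_le_exp (6 / M)
      have e2 : 8 / M * 3 = 4 * (6 / M) := by ring
      linarith
    have h3 : (4 + 3 * (D * s / (n - s - 2 - D))) ^ ℓ ≤ (4 * Real.exp (6 / M)) ^ ℓ :=
      pow_le_pow_left₀ (by positivity) h2 ℓ
    have h4 : Real.exp (6 / M) ^ ℓ ≤ Real.exp 6 := by
      rw [← Real.exp_nat_mul]
      apply Real.exp_le_exp.2
      rw [mul_div_assoc', div_le_iff₀ hM0]
      linarith
    rw [mul_pow] at h3
    have e3 : ∀ y : ℝ, y / s = y * (p * M) := by intro y; rw [hs]; field_simp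
    rw [e3]
    apply mul_le_mul_of_nonneg_right _ (by positivity)
    refine h3.trans ?_
    rw [mul_comm]
    exact mul_le_mul_of_nonneg_right h4 (by positivity)
  · calc _ ≤ ∑ w : Fin n, Real.exp (-(n * p)) :=
          Finset.sum_le_sum fun w _ => er_deg_tail n p hp.le (by linarith) w
      _ = n * Real.exp (-(n * p)) := by simp
      _ ≤ n * Real.exp (-(2 * Real.log n)) := by gcongr
      _ = 1 / n := by
          rw [Real.exp_neg, two_mul, Real.exp_add, Real.exp_log (by linarith)]
          field_simp

end PZF

/-- If `p n * n ≫ log n`, then for each vertex `v` of `G(n,p)`, a.a.s.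
`pt_pzf(G(n,p), v) ≥ (1 + o(1)) max (log₂ log₂ n) (log₄ (1/p))`.  The event `pt ≥ b` (for a
real bound `b > 0`) is the complement of the event that all vertices are blue after
`⌈b⌉₊ - 1` rounds, so a.a.s. `pt ≥ b` is expressed by the probability of the latter event
tending to `0`. -/
theorem pzf_lower_bound
    (p : ℕ → ℝ) (hp : ∀ n, 0 ≤ p n ∧ p n ≤ 1)
    (hdense : Tendsto (fun n : ℕ => Real.log n / (p n * n)) atTop (nhds 0))
    (v : (n : ℕ) → Fin (n + 1)) :
    ∃ e : ℕ → ℝ,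
      Tendsto e atTop (nhds 0) ∧
      Tendsto
        (fun n => PZF.prPZFwithin (n + 1) (p (n + 1)) (v n)
          (⌈(1 + e n) *
              max (Real.logb 2 (Real.logb 2 ((n : ℝ) + 1)))
                (Real.logb 4 (1 / p (n + 1)))⌉₊ - 1))
        atTop (nhds 0) := by
  set M : ℕ → ℝ := fun n => max (Real.logb 2 (Real.logb 2 ((n : ℝ) + 1)))
                (Real.logb 4 (1 / p (n + 1))) with hMdef
  have hN : Tendsto (fun n : ℕ => (n : ℝ) + 1) atTop atTop :=
    tendsto_atTop_add_const_right _ _ tendsto_natCast_atTop_atTop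
  have hMt : Tendsto M atTop atTop := by
    have h1 : Tendsto (fun n : ℕ => Real.logb 2 (Real.logb 2 ((n : ℝ) + 1))) atTop atTop :=
      (Real.tendsto_logb_atTop (by norm_num)).comp
        ((Real.tendsto_logb_atTop (by norm_num)).comp hN)
    exact tendsto_atTop_mono (fun n => le_max_left _ _) h1
  have hsq : Tendsto (fun n => √(M n)) atTop atTop := Real.tendsto_sqrt_atTop.comp hMt
  refine ⟨fun n => -(√(M n))⁻¹, ?_, ?_⟩
  · simpa using (tendsto_inv_atTop_zero.comp hsq).neg
  have hlim : Tendsto (fun n : ℕ => Real.exp 6 * (√(M n) ^ (2 : ℝ)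
      * Real.exp (-(Real.log 2) * √(M n))) + 1 / ((n : ℝ) + 1)) atTop (nhds 0) := by
    have h1 := (tendsto_rpow_mul_exp_neg_mul_atTop_nhds_zero 2 (Real.log 2)
      (Real.log_pos (by norm_num))).comp hsq
    have h2 : Tendsto (fun n : ℕ => 1 / ((n : ℝ) + 1)) atTop (nhds 0) :=
      tendsto_one_div_add_atTop_nhds_zero_nat
    have := (h1.const_mul (Real.exp 6)).add h2
    simpa using this
  have hd : ∀ᶠ n : ℕ in atTop, Real.log ((n + 1 : ℕ) : ℝ) / (p (n + 1) * ((n + 1 : ℕ) : ℝ)) < 1 / 16 :=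
    ((tendsto_add_atTop_iff_nat 1).2 hdense).eventually (gt_mem_nhds (by norm_num))
  refine squeeze_zero' (Eventually.of_forall fun n =>
    PZF.pr_nonneg _ _ (hp _).1 (hp _).2 _ _) ?_ hlim
  filter_upwards [hd, hMt.eventually_ge_atTop 2, eventually_ge_atTop 31] with n hdn hM2 hn
  have hn' : (31 : ℝ) ≤ n := by exact_mod_cast hn
  have hcast : ((n + 1 : ℕ) : ℝ) = (n : ℝ) + 1 := by push_cast; ring
  have hb : (1 + -(√(M n))⁻¹) * M n = M n - √(M n) := by
    have h0 : √(M n) ≠ 0 := by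
      have : 0 < √(M n) := Real.sqrt_pos.2 (by linarith)
      exact this.ne'
    have h1 : √(M n) * √(M n) = M n := Real.mul_self_sqrt (by linarith)
    have h2 : (√(M n))⁻¹ * M n = √(M n) := by
      nth_rewrite 2 [← h1]
      rw [← mul_assoc, inv_mul_cancel₀ h0, one_mul]
    rw [add_mul, neg_mul, h2]; ring
  have hsqrt : √(M n) ≤ M n := by
    rw [Real.sqrt_le_left (by linarith)]; nlinarith
  have hMeq : max (Real.logb 2 (Real.logb 2 ((n : ℝ) + 1))) (Real.logb 4 (1 / p (n + 1))) = M n :=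
    rfl
  rw [hMeq, hb]
  set ℓ : ℕ := ⌈M n - √(M n)⌉₊ - 1 with hℓdef
  have hℓ : (ℓ : ℝ) ≤ M n - √(M n) := by
    rcases Nat.eq_zero_or_pos ⌈M n - √(M n)⌉₊ with h | h
    · rw [hℓdef, h]; simp; right; linarith
    · have h1 := Nat.ceil_lt_add_one (a := M n - √(M n)) (by linarith)
      have h2 : (ℓ : ℝ) + 1 = (⌈M n - √(M n)⌉₊ : ℝ) := by
        have : ℓ + 1 = ⌈M n - √(M n)⌉₊ := by omega
        exact_mod_cast this
      linarith
  have hs0 : 0 ≤ √(M n) := Real.sqrt_nonneg _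
  have hsqM : √(M n) ^ (2 : ℝ) = M n := by
    rw [Real.rpow_two, Real.sq_sqrt (by linarith)]
  have hE : Real.exp (-(Real.log 2) * √(M n)) = (2 : ℝ) ^ (-√(M n)) := by
    rw [Real.rpow_def_of_pos (by norm_num)]; congr 1; ring
  rw [hsqM, hE]
  have hexp6 : 1 ≤ Real.exp 6 := Real.one_le_exp (by norm_num)
  rcases le_total (Real.logb 4 (1 / p (n + 1))) (Real.logb 2 (Real.logb 2 ((n : ℝ) + 1))) with hc | hc
  · have hM : M n = Real.logb 2 (Real.logb 2 ((n : ℝ) + 1)) := max_eq_left hc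
    have h1 := PZF.pr_bound1 (n + 1) (p (n + 1)) (hp _).1 (hp _).2 (v n) ℓ
    rw [hcast] at h1
    set P := PZF.prPZFwithin (n + 1) (p (n + 1)) (v n) ℓ
    have hl2 : 0 < Real.log 2 := Real.log_pos (by norm_num)
    have hlb : 0 < Real.logb 2 ((n : ℝ) + 1) := Real.logb_pos (by norm_num) (by linarith)
    have h2 : (2 : ℝ) ^ (M n) = Real.logb 2 ((n : ℝ) + 1) := by
      rw [hM]; exact Real.rpow_logb (by norm_num) (by norm_num) hlb
    have h3 : Real.log ((n : ℝ) + 1) = (2 : ℝ) ^ (M n) * Real.log 2 := by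
      rw [h2, Real.logb]; field_simp
    rw [h3, ← mul_assoc] at h1
    have h4 : P * (2 : ℝ) ^ (M n) ≤ 2 ^ ℓ := le_of_mul_le_mul_right h1 hl2
    have h5 : (2 : ℝ) ^ ℓ ≤ (2 : ℝ) ^ (-√(M n)) * (2 : ℝ) ^ (M n) := by
      rw [← Real.rpow_natCast, ← Real.rpow_add (by norm_num)]
      exact Real.rpow_le_rpow_of_exponent_le (by norm_num) (by linarith)
    have h6 : P ≤ (2 : ℝ) ^ (-√(M n)) :=
      le_of_mul_le_mul_right (h4.trans h5) (by positivity)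
    have h7 : (0 : ℝ) < (2 : ℝ) ^ (-√(M n)) := by positivity
    have h8 : 0 ≤ 1 / ((n : ℝ) + 1) := by positivity
    have h9 : (2 : ℝ) ^ (-√(M n)) ≤ M n * (2 : ℝ) ^ (-√(M n)) := by nlinarith
    have h10 : M n * (2 : ℝ) ^ (-√(M n)) ≤ Real.exp 6 * (M n * (2 : ℝ) ^ (-√(M n))) :=
      le_mul_of_one_le_left (by positivity) hexp6
    linarith
  · have hM : M n = Real.logb 4 (1 / p (n + 1)) := max_eq_right hc
    have hp0 : 0 < p (n + 1) := by
      rcases (hp (n + 1)).1.lt_or_eq with h | h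
      · exact h
      · rw [← h] at hM; simp at hM; linarith
    have hpM : p (n + 1) = (4 : ℝ) ^ (-(M n)) := by
      have : (4 : ℝ) ^ (M n) = 1 / p (n + 1) := by
        rw [hM]; exact Real.rpow_logb (by norm_num) (by norm_num) (by positivity)
      rw [Real.rpow_neg (by norm_num), this]; simp
    have hp16 : p (n + 1) ≤ 1 / 16 := by
      rw [hpM]
      calc (4 : ℝ) ^ (-(M n)) ≤ (4 : ℝ) ^ (-2 : ℝ) :=
            Real.rpow_le_rpow_of_exponent_le (by norm_num) (by linarith)
        _ = 1 / 16 := by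
            rw [Real.rpow_neg (by norm_num), Real.rpow_two]; norm_num
    have hlog1 : 1 ≤ Real.log ((n + 1 : ℕ) : ℝ) := by
      rw [Real.le_log_iff_exp_le (by positivity), hcast]
      have := Real.exp_one_lt_d9
      linarith
    have hpos : 0 < p (n + 1) * ((n + 1 : ℕ) : ℝ) := by positivity
    rw [div_lt_iff₀ hpos] at hdn
    have h1 := PZF.pr_bound2 (n + 1) (p (n + 1)) hp0 hp16 (v n) ℓ (M n) (by linarith)
      (by linarith) (by omega) (by linarith) (by linarith)
    refine h1.trans ?_
    rw [hcast]
    have h2 : (4 : ℝ) ^ ℓ * p (n + 1) ≤ (2 : ℝ) ^ (-√(M n)) := by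
      rw [hpM, ← Real.rpow_natCast, ← Real.rpow_add (by norm_num)]
      calc (4 : ℝ) ^ ((ℓ : ℝ) + -(M n)) ≤ (4 : ℝ) ^ (-√(M n)) :=
            Real.rpow_le_rpow_of_exponent_le (by norm_num) (by linarith)
        _ ≤ _ := Real.rpow_le_rpow_of_nonpos (by norm_num) (by norm_num) (by linarith)
    have h3 : Real.exp 6 * M n * ((4 : ℝ) ^ ℓ * p (n + 1))
        ≤ Real.exp 6 * M n * (2 : ℝ) ^ (-√(M n)) :=
      mul_le_mul_of_nonneg_left h2 (by positivity)
    have e1 : Real.exp 6 * 4 ^ ℓ * (p (n + 1) * M n)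
      = Real.exp 6 * M n * ((4 : ℝ) ^ ℓ * p (n + 1)) := by ring
    rw [e1]
    have e2 : Real.exp 6 * (M n * (2 : ℝ) ^ (-√(M n)))
      = Real.exp 6 * M n * (2 : ℝ) ^ (-√(M n)) := by ring
    rw [e2]
    linarith
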